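/- Let ℬ ⊆ ℕ = {1,2,…} be a primitive set and for N ∈ ℕ let ℬ̃^(N) := {b ∈ ℬ : b has no prime factor ≤ N}. Then either δ(M_{ℬ̃^(N)}) = 1 for all N ∈ ℕ, or lim_{N→∞} δ(M_{ℬ̃^(N)}) = 0. -/

import Mathlib

open Filter Set Topology MeasureTheory

open scoped Classical

noncomputable section

/-- The set of multiples `M_B ⊆ ℤ` of a set `B ⊆ ℕ`. -/
def multiplesZ (B : Set ℕ) : Set ℤ := {n : ℤ | ∃ b ∈ B, (b : ℤ) ∣ n}

/-- The `B`-free integers `F_B = ℤ ∖ M_B`. -/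
def freeZ (B : Set ℕ) : Set ℤ := (multiplesZ B)ᶜ

/-- The logarithmically weighted averages `(1/log n) ∑_{k=1}^n 1_A(k)/k`. -/
def logWeight (A : Set ℤ) (n : ℕ) : ℝ :=
  (Real.log n)⁻¹ * ∑ k ∈ Finset.Icc 1 n, A.indicator (fun m : ℤ => ((m : ℝ))⁻¹) (k : ℤ)

/-- The lower logarithmic density of a set `A ⊆ ℤ`. -/
def logDensLow (A : Set ℤ) : ℝ := liminf (logWeight A) atTop

/-- `A ⊆ ℤ` has logarithmic density `d`. -/
def HasLogDensity (A : Set ℤ) (d : ℝ) : Prop := Tendsto (logWeight A) atTop (𝓝 d)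

/-- `B` is primitive: no element divides another one. -/
def Primitive (B : Set ℕ) : Prop := ∀ b ∈ B, ∀ b' ∈ B, b ∣ b' → b = b'

/-- `B` is Behrend: its set of multiples has logarithmic density one. -/
def IsBehrend (B : Set ℕ) : Prop := logDensLow (multiplesZ B) = 1

/-- `B` is taut: removing any element strictly decreases the logarithmic density
of the set of multiples. -/
def IsTaut (B : Set ℕ) : Prop :=
  ∀ b ∈ B, logDensLow (multiplesZ (B \ {b})) < logDensLow (multiplesZ B)

/-- `B̃^(N)`: the elements of `B` having no prime factor `≤ N`. -/
def Btilde (B : Set ℕ) (N : ℕ) : Set ℕ := {b ∈ B | ∀ p : ℕ, p.Prime → p ∣ b → N < p}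

/-- `B^(N)`: the elements of `B` all of whose prime factors are `≤ N`. -/
def Bsmooth (B : Set ℕ) (N : ℕ) : Set ℕ := {b ∈ B | ∀ p : ℕ, p.Prime → p ∣ b → p ≤ N}


/-- Sum of `f p` over primes `p ≤ n`. -/
def psum (f : ℕ → ℝ) (n : ℕ) : ℝ := ∑ p ∈ Finset.range (n+1) with p.Prime, f p

lemma fact_val {n p : ℕ} (hp : p.Prime) : n / p ≤ (n.factorial).factorization p := by
  have h1 := Nat.factorization_factorial_mul (n := n / p) hp
  have h2 : (p * (n/p)).factorial ∣ n.factorial := Nat.factorial_dvd_factorial (Nat.mul_div_le n p)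
  have h3 := (Nat.factorization_le_iff_dvd (Nat.factorial_ne_zero _) (Nat.factorial_ne_zero _)).2 h2 p
  omega

lemma primeFactors_fact (n : ℕ) :
    (n.factorial).primeFactors = (Finset.range (n+1)).filter Nat.Prime := by
  ext p
  simp only [Nat.mem_primeFactors, Finset.mem_filter, Finset.mem_range]
  constructor
  · rintro ⟨h, h2, h3⟩
    exact ⟨by have := (h.dvd_factorial).1 h2; omega, h⟩
  · rintro ⟨h, h2⟩
    exact ⟨h2, (h2.dvd_factorial).2 (by omega), Nat.factorial_ne_zero _⟩

lemma mertens1 (n : ℕ) (hn : 1 ≤ n) :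
    psum (fun p => Real.log p / p) n ≤ Real.log n + Real.log 4 := by
  have h1 : Real.log (n.factorial) = psum (fun p => (n.factorial.factorization p) * Real.log p) n := by
    conv_lhs => rw [← Nat.prod_factorization_pow_eq_self (Nat.factorial_ne_zero n)]
    rw [Finsupp.prod, Nat.support_factorization, primeFactors_fact]
    push_cast
    rw [Real.log_prod]
    · unfold psum
      refine Finset.sum_congr rfl fun p hp => ?_
      rw [Real.log_pow]
    · intro p hp
      have := (Finset.mem_filter.1 hp).2.pos
      positivity
  have h2 : Real.log (n.factorial) ≤ n * Real.log n := by
    rw [← Real.log_pow]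
    apply Real.log_le_log
    · exact_mod_cast Nat.factorial_pos n
    · exact_mod_cast Nat.factorial_le_pow n
  have h3 : psum (fun p => Real.log p) n ≤ n * Real.log 4 := by
    have := Chebyshev.theta_le_log4_mul_x (x := n) (by positivity)
    rw [Chebyshev.theta_eq_log_primorial, Nat.floor_natCast, primorial] at this
    push_cast at this
    rw [Real.log_prod] at this
    · unfold psum; linarith
    · intro p hp
      have := (Finset.mem_filter.1 hp).2.pos
      positivity
  have h4 : n * psum (fun p => Real.log p / p) n ≤ 
      psum (fun p => (n.factorial.factorization p) * Real.log p) n + psum (fun p => Real.log p) n := by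
    unfold psum
    rw [Finset.mul_sum, ← Finset.sum_add_distrib]
    refine Finset.sum_le_sum fun p hp => ?_
    have hp := (Finset.mem_filter.1 hp).2
    have h0 : (0:ℝ) ≤ Real.log p := Real.log_natCast_nonneg p
    have a1 : (n:ℝ) / p ≤ (n / p : ℕ) + 1 := by
      rw [div_le_iff₀ (by exact_mod_cast hp.pos)]
      have := Nat.lt_div_mul_add (a := n) hp.pos
      have h : n ≤ (n/p + 1) * p := by nlinarith
      exact_mod_cast h
    have a2 : ((n/p : ℕ) : ℝ) ≤ (n.factorial.factorization p) := by exact_mod_cast fact_val hp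
    calc (n:ℝ) * (Real.log p / p) = (n / p) * Real.log p := by ring
      _ ≤ (n.factorial.factorization p + 1) * Real.log p := by gcongr; linarith
      _ = _ := by ring
  have hn' : (0:ℝ) < n := by exact_mod_cast hn
  have : n * psum (fun p => Real.log p / p) n ≤ n * (Real.log n + Real.log 4) := by linarith
  exact le_of_mul_le_mul_left this hn'

lemma psum_succ (f : ℕ → ℝ) (n : ℕ) :
    psum f (n+1) = psum f n + if (n+1).Prime then f (n+1) else 0 := by
  unfold psum
  rw [Finset.sum_filter, Finset.sum_filter, Finset.sum_range_succ]

lemma psum_two (f : ℕ → ℝ) : psum f 2 = f 2 := by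
  unfold psum
  rw [Finset.sum_filter]
  simp [Finset.sum_range_succ, Nat.prime_two, Nat.not_prime_one, Nat.not_prime_zero]

lemma mertens2 : ∃ K : ℝ, ∀ n : ℕ, 2 ≤ n →
    psum (fun p => (p:ℝ)⁻¹) n ≤ Real.log (Real.log n) + K := by
  set C := Real.log 4 with hC
  have hC0 : 0 ≤ C := Real.log_nonneg (by norm_num)
  obtain ⟨K, hK⟩ : ∃ K, 0 = Real.log (Real.log 2) - C / Real.log 2 + K := ⟨-(Real.log (Real.log 2) - C / Real.log 2), by ring⟩
  have key : ∀ n : ℕ, 2 ≤ n → psum (fun p => (p:ℝ)⁻¹) n - psum (fun p => Real.log p / p) n / Real.log n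
      ≤ Real.log (Real.log n) - C / Real.log n + K := by
    intro n hn
    induction n, hn using Nat.le_induction with
    | base =>
      rw [psum_two, psum_two]
      have : Real.log 2 ≠ 0 := (Real.log_pos (by norm_num)).ne'
      push_cast
      rw [← hK]
      field_simp
      simp
    | succ n hn ih =>
      have hl : 0 < Real.log n := Real.log_pos (by exact_mod_cast hn)
      have hl1 : Real.log n ≤ Real.log (n+1:ℕ) := Real.log_le_log (by positivity) (by push_cast; linarith)
      have hA := mertens1 n (by omega)
      rw [psum_succ, psum_succ]
      set A := psum (fun p => Real.log p / p) n
      set P := psum (fun p => (p:ℝ)⁻¹) n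
      set u := Real.log n
      set v := Real.log (n+1:ℕ)
      have hv : 0 < v := by linarith
      have e : P + (if (n+1).Prime then ((n+1:ℕ):ℝ)⁻¹ else 0) - (A + if (n+1).Prime then v / (n+1:ℕ) else 0)/v
         = (P - A / u) + A * (1/u - 1/v) := by
        split_ifs
        · have : ((n+1:ℕ):ℝ) ≠ 0 := by positivity
          field_simp
          ring
        · field_simp; ring
      rw [e]
      have h1 : 0 ≤ 1/u - 1/v := by
        rw [sub_nonneg]; gcongr
      have h2 : A * (1/u - 1/v) ≤ (u + C) * (1/u-1/v) := by gcongr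
      have h3 : (u + C) * (1/u - 1/v) = (1 - u / v) + (C / u - C / v) := by field_simp
      have h4 : 1 - u / v ≤ Real.log v - Real.log u := by
        rw [← Real.log_div hv.ne' hl.ne']
        have := Real.one_sub_inv_le_log_of_pos (x := v / u) (by positivity)
        rwa [inv_div] at this
      linarith
  refine ⟨K + 1, fun n hn => ?_⟩
  have h := key n hn
  have hl : 0 < Real.log n := Real.log_pos (by exact_mod_cast hn)
  have hA := mertens1 n (by omega)
  have : psum (fun p => Real.log p / p) n / Real.log n ≤ 1 + C / Real.log n := by
    rw [div_le_iff₀ hl]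
    field_simp
    linarith
  linarith

lemma mertens3 : ∃ C : ℝ, 0 < C ∧ ∀ n : ℕ, 2 ≤ n →
    1 ≤ C * Real.log n * ((n.factorial.totient : ℝ) / n.factorial) := by
  obtain ⟨K, hK⟩ := mertens2
  refine ⟨Real.exp (K+1), Real.exp_pos _, fun n hn => ?_⟩
  have hl : 0 < Real.log n := Real.log_pos (by exact_mod_cast hn)
  have e : ((n.factorial.totient : ℝ) / n.factorial) =
      ∏ p ∈ Finset.range (n+1) with p.Prime, (1 - (p:ℝ)⁻¹) := by
    have := Nat.totient_eq_mul_prod_factors n.factorial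
    rw [primeFactors_fact] at this
    have h2 : ((n.factorial.totient : ℚ) : ℝ) = ((n.factorial * ∏ p ∈ Finset.range (n+1) with p.Prime, (1 - (p:ℚ)⁻¹) : ℚ) : ℝ) := by
      rw [this]
    push_cast at h2
    rw [h2]
    have : (n.factorial : ℝ) ≠ 0 := by exact_mod_cast Nat.factorial_ne_zero n
    field_simp
  have h1 : psum (fun p => ((p:ℝ) - 1)⁻¹) n ≤ psum (fun p => (p:ℝ)⁻¹) n + 1 := by
    have : ∀ m : ℕ, 1 ≤ m → psum (fun p => ((p:ℝ) - 1)⁻¹) m ≤ psum (fun p => (p:ℝ)⁻¹) m + 1 - 1 / m := by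
      intro m hm
      induction m, hm using Nat.le_induction with
      | base => simp [psum, Finset.sum_filter, Finset.sum_range_succ, Nat.not_prime_one, Nat.not_prime_zero]
      | succ m hm ih =>
        rw [psum_succ, psum_succ]
        have hm0 : (0:ℝ) < m := by exact_mod_cast hm
        have a : (1:ℝ) / (m+1:ℕ) ≤ 1 / m := by gcongr; omega
        split_ifs
        · have : (((m+1:ℕ):ℝ) - 1)⁻¹ = 1 / m := by simp
          rw [this]
          have : (((m+1:ℕ):ℝ))⁻¹ = 1 / (m+1:ℕ) := by simp
          rw [this]
          linarith
        · linarith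
    have := this n (by omega)
    have : (0:ℝ) ≤ 1 / n := by positivity
    linarith
  have h2 : Real.exp (-(psum (fun p => ((p:ℝ) - 1)⁻¹) n)) ≤ ∏ p ∈ Finset.range (n+1) with p.Prime, (1 - (p:ℝ)⁻¹) := by
    unfold psum
    rw [← Finset.sum_neg_distrib, Real.exp_sum]
    refine Finset.prod_le_prod (fun _ _ => (Real.exp_pos _).le) fun p hp => ?_
    have hp := (Finset.mem_filter.1 hp).2
    have h2 : (2:ℝ) ≤ p := by exact_mod_cast hp.two_le
    rw [Real.exp_neg, inv_le_comm₀ (Real.exp_pos _)]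
    · have := Real.add_one_le_exp (((p:ℝ) - 1)⁻¹)
      refine le_trans (le_of_eq ?_) this
      have : (p:ℝ) - 1 ≠ 0 := by linarith
      field_simp
      ring
    · have : (p:ℝ)⁻¹ ≤ 2⁻¹ := by gcongr
      norm_num at this ⊢
      linarith
  rw [e]
  have h3 : Real.exp (-(Real.log (Real.log n) + K + 1)) ≤ Real.exp (-(psum (fun p => ((p:ℝ) - 1)⁻¹) n)) := by
    apply Real.exp_le_exp.2
    have := hK n hn
    linarith
  have h4 : Real.exp (K+1) * Real.log n * Real.exp (-(Real.log (Real.log n) + K + 1)) = 1 := by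
    conv_lhs => rw [← Real.exp_log hl]
    rw [Real.log_exp, ← Real.exp_add, ← Real.exp_add]
    simp
    ring
  calc 1 = _ := h4.symm
    _ ≤ _ := by gcongr; exact h3.trans h2

lemma lw_nonneg (A : Set ℤ) (n : ℕ) : 0 ≤ logWeight A n := by
  unfold logWeight
  refine mul_nonneg (inv_nonneg.2 (Real.log_natCast_nonneg n)) (Finset.sum_nonneg fun k hk => ?_)
  refine Set.indicator_apply_nonneg fun _ => ?_
  positivity

lemma lw_mono {A A' : Set ℤ} (h : A ⊆ A') (n : ℕ) : logWeight A n ≤ logWeight A' n := by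
  unfold logWeight
  refine mul_le_mul_of_nonneg_left (Finset.sum_le_sum fun k hk => ?_) (inv_nonneg.2 (Real.log_natCast_nonneg n))
  by_cases h1 : (k:ℤ) ∈ A
  · rw [Set.indicator_of_mem h1, Set.indicator_of_mem (h h1)]
  · rw [Set.indicator_of_notMem h1]
    refine Set.indicator_apply_nonneg fun _ => ?_
    positivity

lemma lw_le (A : Set ℤ) (n : ℕ) : logWeight A n ≤ (Real.log n)⁻¹ * (1 + Real.log n) := by
  unfold logWeight
  refine mul_le_mul_of_nonneg_left ?_ (inv_nonneg.2 (Real.log_natCast_nonneg n))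
  refine le_trans ?_ (harmonic_le_one_add_log n)
  rw [harmonic_eq_sum_Icc]
  push_cast
  refine Finset.sum_le_sum fun k hk => ?_
  by_cases h1 : (k:ℤ) ∈ A
  · rw [Set.indicator_of_mem h1]; simp
  · rw [Set.indicator_of_notMem h1]; positivity

lemma tendsto_loginv : Tendsto (fun n : ℕ => (Real.log n)⁻¹) atTop (𝓝 0) :=
  (Real.tendsto_log_atTop.comp tendsto_natCast_atTop_atTop).inv_tendsto_atTop

lemma eventually_log_pos : ∀ᶠ n : ℕ in atTop, 0 < Real.log n := by
  filter_upwards [eventually_ge_atTop 2] with n hn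
  exact Real.log_pos (by exact_mod_cast hn)

lemma tendsto_up : Tendsto (fun n : ℕ => (Real.log n)⁻¹ * (1 + Real.log n)) atTop (𝓝 1) := by
  have : Tendsto (fun n : ℕ => (Real.log n)⁻¹ + 1) atTop (𝓝 (0 + 1)) := tendsto_loginv.add_const 1
  rw [zero_add] at this
  refine this.congr' ?_
  filter_upwards [eventually_log_pos] with n hn
  field_simp

lemma lw_bdd (A : Set ℤ) : IsBoundedUnder (· ≤ ·) atTop (logWeight A) :=
  tendsto_up.isBoundedUnder_le.mono_le (Eventually.of_forall (lw_le A))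

lemma lw_bdd' (A : Set ℤ) : IsBoundedUnder (· ≥ ·) atTop (logWeight A) :=
  isBoundedUnder_of ⟨0, lw_nonneg A⟩

lemma ldl_le_one (A : Set ℤ) : logDensLow A ≤ 1 := by
  rw [← tendsto_up.liminf_eq]
  exact liminf_le_liminf (Eventually.of_forall (lw_le A)) (lw_bdd' A)
    tendsto_up.isBoundedUnder_le.isCoboundedUnder_ge

lemma ldl_nonneg (A : Set ℤ) : 0 ≤ logDensLow A :=
  le_liminf_of_le (lw_bdd A).isCoboundedUnder_ge (Eventually.of_forall (lw_nonneg A))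

lemma ldl_mono {A A' : Set ℤ} (h : A ⊆ A') : logDensLow A ≤ logDensLow A' :=
  liminf_le_liminf (Eventually.of_forall (lw_mono h)) (lw_bdd' A) (lw_bdd A').isCoboundedUnder_ge

lemma lw_eq (A : Set ℤ) (n : ℕ) :
    logWeight A n = (Real.log n)⁻¹ * ∑ k ∈ Finset.Ico 1 (n+1) with ((k:ℕ):ℤ) ∈ A, (k:ℝ)⁻¹ := by
  unfold logWeight
  rw [Finset.sum_filter]
  congr 1

lemma block_sum (p : ℕ → Prop) (Q : ℕ) (hQ : 0 < Q) (hp : Function.Periodic p Q) (m : ℕ) :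
    ((Nat.count p Q : ℕ) : ℝ) / Q * Real.log (m+1) ≤ ∑ k ∈ Finset.Ico 1 (m*Q+1) with p k, (k:ℝ)⁻¹ := by
  induction m with
  | zero => simp
  | succ m ih =>
    have e : ∑ k ∈ Finset.Ico 1 ((m+1)*Q+1) with p k, (k:ℝ)⁻¹ =
       ∑ k ∈ Finset.Ico 1 (m*Q+1) with p k, (k:ℝ)⁻¹ + ∑ k ∈ Finset.Ico (m*Q+1) (m*Q+1+Q) with p k, (k:ℝ)⁻¹ := by
      simp only [Finset.sum_filter]
      rw [Finset.sum_Ico_consecutive _ (by omega) (by omega)]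
      congr 2
      ring
    have h1 : ((Nat.count p Q : ℕ) : ℝ) * (((m+1)*Q : ℕ):ℝ)⁻¹ ≤ ∑ k ∈ Finset.Ico (m*Q+1) (m*Q+1+Q) with p k, (k:ℝ)⁻¹ := by
      rw [← Nat.filter_Ico_card_eq_of_periodic (m*Q+1) Q p hp, ← nsmul_eq_mul]
      refine Finset.card_nsmul_le_sum _ _ _ fun k hk => ?_
      have := (Finset.mem_Ico.1 (Finset.mem_filter.1 hk).1)
      have hk0 : (0:ℝ) < k := by exact_mod_cast (show 0 < k by omega)
      gcongr
      nlinarith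
    have h2 : Real.log ((m+1:ℕ)+1) ≤ Real.log (m+1) + 1 / (m+1) := by
      have h0 : (0:ℝ) < m + 1 := by positivity
      have := Real.log_le_sub_one_of_pos (x := ((m+1:ℕ)+1:ℝ)/(m+1)) (by positivity)
      rw [Real.log_div (by positivity) (by positivity)] at this
      have e2 : ((m+1:ℕ)+1:ℝ)/(m+1) - 1 = 1 / (m+1) := by push_cast; field_simp; ring
      linarith
    have h3 : ((Nat.count p Q : ℕ) : ℝ) / Q * Real.log ((m+1:ℕ)+1) ≤ ((Nat.count p Q : ℕ) : ℝ) / Q * (Real.log (m+1) + 1 / (m+1)) := by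
      gcongr
    have h4 : ((Nat.count p Q : ℕ) : ℝ) / Q * (Real.log (m+1) + 1 / (m+1)) = 
       ((Nat.count p Q : ℕ) : ℝ) / Q * Real.log (m+1) + ((Nat.count p Q : ℕ) : ℝ) * (((m+1)*Q : ℕ):ℝ)⁻¹ := by
      push_cast
      have : (Q:ℝ) ≠ 0 := by positivity
      field_simp
    rw [e]
    linarith

lemma ldl_periodic (A : Set ℤ) (p : ℕ → Prop) (Q : ℕ) (hQ : 0 < Q) (hp : Function.Periodic p Q)
    (hA : ∀ k : ℕ, p k → (k:ℤ) ∈ A) : ((Nat.count p Q : ℕ) : ℝ) / Q ≤ logDensLow A := by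
  set r : ℝ := ((Nat.count p Q : ℕ) : ℝ) / Q with hr
  have hr0 : 0 ≤ r := by positivity
  have ht : Tendsto (fun n : ℕ => r * (1 - Real.log Q * (Real.log n)⁻¹)) atTop (𝓝 r) := by
    have := ((tendsto_loginv.const_mul (Real.log Q)).const_sub 1).const_mul r
    simpa using this
  have hle : ∀ᶠ n : ℕ in atTop, r * (1 - Real.log Q * (Real.log n)⁻¹) ≤ logWeight A n := by
    filter_upwards [eventually_log_pos, eventually_gt_atTop 0] with n hn hn0
    rw [lw_eq]
    have h1 := block_sum p Q hQ hp (n / Q)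
    have h2 : ∑ k ∈ Finset.Ico 1 (n/Q*Q+1) with p k, (k:ℝ)⁻¹ ≤ ∑ k ∈ Finset.Ico 1 (n+1) with ((k:ℕ):ℤ) ∈ A, (k:ℝ)⁻¹ := by
      refine Finset.sum_le_sum_of_subset_of_nonneg ?_ fun _ _ _ => by positivity
      intro k hk
      simp only [Finset.mem_filter, Finset.mem_Ico] at hk ⊢
      have := Nat.div_mul_le_self n Q
      exact ⟨by omega, hA k hk.2⟩
    have h3 : Real.log n - Real.log Q ≤ Real.log ((n/Q:ℕ)+1) := by
      have hQ' : (0:ℝ) < Q := by exact_mod_cast hQ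
      have hn' : (0:ℝ) < n := by exact_mod_cast hn0
      rw [← Real.log_div (by positivity) (by positivity)]
      apply Real.log_le_log (by positivity)
      rw [div_le_iff₀ hQ']
      have := Nat.lt_div_mul_add (a := n) hQ
      have h : n ≤ (n/Q + 1) * Q := by nlinarith
      exact_mod_cast h
    have h4 : r * (Real.log n - Real.log Q) ≤ ∑ k ∈ Finset.Ico 1 (n+1) with ((k:ℕ):ℤ) ∈ A, (k:ℝ)⁻¹ :=
      le_trans (le_trans (by gcongr) h1) h2
    calc r * (1 - Real.log Q * (Real.log n)⁻¹) = (Real.log n)⁻¹ * (r * (Real.log n - Real.log Q)) := by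
          field_simp
      _ ≤ _ := by gcongr
  rw [← ht.liminf_eq]
  exact liminf_le_liminf hle ht.isBoundedUnder_ge (lw_bdd A).isCoboundedUnder_ge

lemma count_periodic_mul (p : ℕ → Prop) [DecidablePred p] (Q : ℕ) (hp : Function.Periodic p Q) (m : ℕ) :
    Nat.count p (m * Q) = m * Nat.count p Q := by
  induction m with
  | zero => simp
  | succ m ih =>
    rw [add_mul, one_mul, Nat.count_add, ih, add_mul, one_mul]
    congr 2
    funext k
    have := (hp.nat_mul m) k
    rw [add_comm, ← this]
    simp

/-- `x` is a multiple of some element of `S`. -/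
def hit (S : Finset ℕ) (x : ℕ) : Prop := ∃ b ∈ S, b ∣ x

lemma hit_periodic (S : Finset ℕ) (Q : ℕ) (h : ∀ b ∈ S, b ∣ Q) : Function.Periodic (hit S) Q := by
  intro x
  unfold hit
  refine propext (exists_congr fun b => and_congr_right fun hb => ?_)
  exact (Nat.dvd_add_left (h b hb))

lemma count_not (p : ℕ → Prop) (Q : ℕ) : Nat.count p Q + Nat.count (fun x => ¬ p x) Q = Q := by
  rw [Nat.count_eq_card_filter_range, Nat.count_eq_card_filter_range]
  have := Finset.card_filter_add_card_filter_not (s := Finset.range Q) p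
  simpa using this

lemma indep (S T : Finset ℕ) (Q R : ℕ) (hQ : 0 < Q) (hR : 0 < R) (hQR : Nat.Coprime Q R) (hS : ∀ b ∈ S, b ∣ Q)
    (hT : ∀ b ∈ T, b ∣ R) :
    Nat.count (fun x => ¬ hit (S ∪ T) x) (Q * R) ≤
      Nat.count (fun x => ¬ hit S x) Q * Nat.count (fun x => ¬ hit T x) R := by
  simp only [Nat.count_eq_card_filter_range]
  rw [← Finset.card_product]
  refine Finset.card_le_card_of_injOn (fun x => (x % Q, x % R)) ?_ ?_
  · intro x hx
    simp only [Finset.coe_filter, Finset.mem_range, Set.mem_ofPred_eq, Finset.coe_product, Set.mem_prod] at hx ⊢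
    refine ⟨⟨Nat.mod_lt _ hQ, ?_⟩, Nat.mod_lt _ hR, ?_⟩
    · rintro ⟨b, hb, hbx⟩
      exact hx.2 ⟨b, Finset.mem_union_left _ hb, (Nat.dvd_mod_iff (hS b hb)).1 hbx⟩
    · rintro ⟨b, hb, hbx⟩
      exact hx.2 ⟨b, Finset.mem_union_right _ hb, (Nat.dvd_mod_iff (hT b hb)).1 hbx⟩
  · intro x hx y hy hxy
    simp only [Finset.coe_filter, Finset.mem_range, Set.mem_ofPred_eq, Prod.mk.injEq] at hx hy hxy
    have := (Nat.modEq_and_modEq_iff_modEq_mul hQR).1 ⟨hxy.1, hxy.2⟩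
    exact Nat.ModEq.eq_of_lt_of_lt this hx.1 hy.1

lemma count_hit_ge (S : Finset ℕ) (y Q : ℕ) (hS : ∀ b ∈ S, b ∣ Q) :
    ∑ n ∈ Finset.Ico 1 (y+1) with hit S n, ((Q * y.factorial * y.factorial : ℕ) : ℝ) * ((y.factorial.totient : ℝ) / y.factorial) * (n:ℝ)⁻¹
      ≤ Nat.count (hit S) (Q * y.factorial * y.factorial) := by
  set F := y.factorial with hF
  have hF0 : 0 < F := Nat.factorial_pos y
  have hdvd : ∀ n ∈ Finset.Ico 1 (y+1), n ∣ F := fun n hn => by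
    have := Finset.mem_Ico.1 hn
    exact Nat.dvd_factorial (by omega) (by omega)
  let T : ℕ → Finset ℕ := fun n => ((Finset.range (Q * (F / n) * F)).filter (fun k => F.Coprime k)).image (fun k => n * k)
  have hT : ∀ n ∈ (Finset.Ico 1 (y+1)).filter (hit S), ((T n).card : ℝ) = ((Q * F * F : ℕ) : ℝ) * ((F.totient : ℝ) / F) * (n:ℝ)⁻¹ := by
    intro n hn
    rw [Finset.mem_filter] at hn
    have hn0 : 0 < n := by have := Finset.mem_Ico.1 hn.1; omega
    have : (T n).card = Q * (F / n) * F.totient := by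
      rw [Finset.card_image_of_injective _ (fun a b h => Nat.eq_of_mul_eq_mul_left hn0 h)]
      rw [← Nat.count_eq_card_filter_range, count_periodic_mul _ _ (Nat.periodic_coprime F),
        Nat.count_eq_card_filter_range]
      rfl
    rw [this]
    obtain ⟨q, hq⟩ := hdvd n hn.1
    have e : F / n = q := by rw [hq]; exact Nat.mul_div_cancel_left q hn0
    rw [e]
    have hFr : (F:ℝ) = n * q := by exact_mod_cast hq
    have hn' : (n:ℝ) ≠ 0 := by positivity
    have hF' : (F:ℝ) ≠ 0 := by positivity
    push_cast
    have : (q:ℝ) = F / n := by rw [hFr]; field_simp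
    rw [this]
    field_simp
  rw [← Finset.sum_congr rfl hT, ← Nat.cast_sum, Nat.cast_le, ← Finset.card_biUnion]
  · rw [Nat.count_eq_card_filter_range]
    refine Finset.card_le_card fun x hx => ?_
    rw [Finset.mem_biUnion] at hx
    obtain ⟨n, hn, hx⟩ := hx
    rw [Finset.mem_filter] at hn
    obtain ⟨k, hk, rfl⟩ := Finset.mem_image.1 hx
    rw [Finset.mem_filter, Finset.mem_range] at hk ⊢
    obtain ⟨q, hq⟩ := hdvd n hn.1
    have hn0 : 0 < n := by have := Finset.mem_Ico.1 hn.1; omega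
    have e : F / n = q := by rw [hq]; exact Nat.mul_div_cancel_left q hn0
    rw [e] at hk
    constructor
    · calc n * k < n * (Q * q * F) := by exact Nat.mul_lt_mul_of_pos_left hk.1 hn0
        _ = Q * (n * q) * F := by ring
        _ = _ := by rw [← hq]
    · obtain ⟨b, hb, hbn⟩ := hn.2
      exact ⟨b, hb, hbn.mul_right k⟩
  · intro n hn n' hn' hne
    rw [Finset.mem_coe, Finset.mem_filter] at hn hn'
    rw [Function.onFun, Finset.disjoint_left]
    intro x hx hx'
    obtain ⟨k, hk, rfl⟩ := Finset.mem_image.1 hx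
    obtain ⟨k', hk', h⟩ := Finset.mem_image.1 hx'
    rw [Finset.mem_filter] at hk hk'
    apply hne
    apply Nat.dvd_antisymm
    · exact ((hk'.2.coprime_dvd_left (hdvd n hn.1))).dvd_of_dvd_mul_right (h ▸ Dvd.intro _ rfl)
    · exact ((hk.2.coprime_dvd_left (hdvd n' hn'.1))).dvd_of_dvd_mul_right (h ▸ Dvd.intro _ rfl)

lemma stepA : ∃ C : ℝ, 0 < C ∧ ∀ (B : Set ℕ) (α : ℝ), 0 ∉ B → 0 < α → α ≤ logDensLow (multiplesZ B) →
    ∃ S : Finset ℕ, (∀ b ∈ S, b ∈ B) ∧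
      (Nat.count (fun x => ¬ hit S x) (∏ b ∈ S, b) : ℝ) ≤ (1 - α / (2 * C)) * (∏ b ∈ S, b : ℕ) := by
  obtain ⟨C, hC, hM⟩ := mertens3
  refine ⟨C, hC, fun B α hB hα hd => ?_⟩
  have h1 : ∀ᶠ n in atTop, α / 2 < logWeight (multiplesZ B) n :=
    eventually_lt_of_lt_liminf (lt_of_lt_of_le (by linarith) hd) (lw_bdd' _)
  obtain ⟨y, hy, hy2⟩ := (h1.and (eventually_ge_atTop 2)).exists
  have hl : 0 < Real.log y := Real.log_pos (by exact_mod_cast hy2)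
  let S : Finset ℕ := (Finset.Ico 1 (y+1)).filter (· ∈ B)
  refine ⟨S, fun b hb => (Finset.mem_filter.1 hb).2, ?_⟩
  set Q := ∏ b ∈ S, b with hQ
  have hSQ : ∀ b ∈ S, b ∣ Q := fun b hb => Finset.dvd_prod_of_mem _ hb
  have hQ0 : 0 < Q := Finset.prod_pos fun b hb => by
    have := Finset.mem_Ico.1 (Finset.mem_filter.1 hb).1; omega
  rw [lw_eq] at hy
  have hsum : ∑ k ∈ Finset.Ico 1 (y+1) with ((k:ℕ):ℤ) ∈ multiplesZ B, (k:ℝ)⁻¹ ≤ ∑ n ∈ Finset.Ico 1 (y+1) with hit S n, (n:ℝ)⁻¹ := by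
    refine Finset.sum_le_sum_of_subset_of_nonneg ?_ fun _ _ _ => by positivity
    intro k hk
    rw [Finset.mem_filter] at hk ⊢
    refine ⟨hk.1, ?_⟩
    obtain ⟨b, hb, hbk⟩ := hk.2
    have hbk' : b ∣ k := by exact_mod_cast hbk
    have := Finset.mem_Ico.1 hk.1
    have hle := Nat.le_of_dvd (by omega) hbk'
    have : b ≠ 0 := fun h => hB (h ▸ hb)
    exact ⟨b, Finset.mem_filter.2 ⟨Finset.mem_Ico.2 ⟨by omega, by omega⟩, hb⟩, hbk'⟩
  have hcnt := count_hit_ge S y Q hSQ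
  rw [← Finset.mul_sum] at hcnt
  set s := ∑ n ∈ Finset.Ico 1 (y+1) with hit S n, (n:ℝ)⁻¹
  set F := y.factorial with hF
  have hF0 : 0 < F := Nat.factorial_pos y
  have hs : α / 2 * Real.log y ≤ s := by
    refine le_trans ?_ hsum
    rw [inv_mul_eq_div, lt_div_iff₀ hl] at hy
    exact hy.le
  have hm := hM y hy2
  set t : ℝ := (F.totient : ℝ) / F
  have ht0 : 0 ≤ t := by positivity
  have h5 : α / (2 * C) ≤ t * s := by
    have : 1 * (α / (2*C)) ≤ (C * Real.log y * t) * (α / (2*C)) := by gcongr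
    calc α / (2*C) = 1 * (α / (2*C)) := by ring
      _ ≤ (C * Real.log y * t) * (α / (2*C)) := this
      _ = t * (α / 2 * Real.log y) := by field_simp
      _ ≤ t * s := by gcongr
  have e1 : Q * F * F = (F * F) * Q := by ring
  rw [e1, count_periodic_mul _ _ (hit_periodic S Q hSQ)] at hcnt
  push_cast at hcnt
  have hFF : (0:ℝ) < F * F := by positivity
  have h6 : (Q:ℝ) * (t * s) ≤ Nat.count (hit S) Q := by
    refine le_of_mul_le_mul_left ?_ hFF
    linarith
  have h7 : (Q:ℝ) * (α / (2*C)) ≤ Q * (t * s) := by gcongr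
  have h8 : (Nat.count (hit S) Q : ℝ) + Nat.count (fun x => ¬ hit S x) Q = Q := by
    exact_mod_cast count_not (hit S) Q
  linarith

lemma iter (B : Set ℕ) (hB : 0 ∉ B) (α C : ℝ) (hC : 0 < C)
    (H : ∀ N, ∃ S : Finset ℕ, (∀ b ∈ S, b ∈ Btilde B N) ∧
      (Nat.count (fun x => ¬ hit S x) (∏ b ∈ S, b) : ℝ) ≤ C * (∏ b ∈ S, b : ℕ)) (k : ℕ) :
    ∀ N, ∃ (S : Finset ℕ) (Q : ℕ), 0 < Q ∧ (∀ b ∈ S, b ∣ Q) ∧ (∀ b ∈ S, b ∈ Btilde B N) ∧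
      (∀ p : ℕ, p.Prime → p ∣ Q → N < p) ∧
      (Nat.count (fun x => ¬ hit S x) Q : ℝ) ≤ C ^ k * Q := by
  induction k with
  | zero =>
    intro N
    refine ⟨∅, 1, one_pos, by simp, by simp, fun p hp h => absurd h hp.not_dvd_one, ?_⟩
    simp only [pow_zero, one_mul]
    exact_mod_cast Nat.count_le _
  | succ k ih =>
    intro N
    obtain ⟨S, hS, hc⟩ := H N
    set Q := ∏ b ∈ S, b with hQ
    have hQ0 : 0 < Q := Finset.prod_pos fun b hb => Nat.pos_of_ne_zero fun h => hB (h ▸ (hS b hb).1)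
    obtain ⟨T, R, hR0, hTR, hT, hRp, hcR⟩ := ih (max N Q)
    have hcop : Nat.Coprime Q R := by
      refine Nat.coprime_of_dvd fun p hp h1 h2 => ?_
      have := hRp p hp h2
      have := Nat.le_of_dvd hQ0 h1
      omega
    have hSQ : ∀ b ∈ S, b ∣ Q := fun b hb => Finset.dvd_prod_of_mem _ hb
    refine ⟨S ∪ T, Q * R, by positivity, ?_, ?_, ?_, ?_⟩
    · intro b hb
      rcases Finset.mem_union.1 hb with h | h
      · exact (hSQ b h).mul_right _
      · exact (hTR b h).mul_left _
    · intro b hb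
      rcases Finset.mem_union.1 hb with h | h
      · exact hS b h
      · exact ⟨(hT b h).1, fun p hp hpb => by have := (hT b h).2 p hp hpb; omega⟩
    · intro p hp h
      rcases (hp.dvd_mul).1 h with h | h
      · obtain ⟨b, hb, hpb⟩ := (hp.prime.dvd_finsetProd_iff _).1 h
        exact (hS b hb).2 p hp hpb
      · have := hRp p hp h; omega
    · have h := indep S T Q R hQ0 hR0 hcop hSQ hTR
      calc (Nat.count (fun x => ¬ hit (S ∪ T) x) (Q * R) : ℝ) 
          ≤ (Nat.count (fun x => ¬ hit S x) Q : ℝ) * Nat.count (fun x => ¬ hit T x) R := by exact_mod_cast h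
        _ ≤ (C * Q) * (C ^ k * R) := by gcongr
        _ = _ := by push_cast; ring

/-- Dichotomy: either `δ(M_{B̃^(N)}) = 1` for all `N`, or `δ(M_{B̃^(N)}) → 0`. -/
theorem btilde_dichotomy (B : Set ℕ) (hB0 : 0 ∉ B) (hprim : Primitive B) :
    (∀ N : ℕ, logDensLow (multiplesZ (Btilde B N)) = 1) ∨
      Tendsto (fun N : ℕ => logDensLow (multiplesZ (Btilde B N))) atTop (𝓝 0) := by
  set f : ℕ → ℝ := fun N => logDensLow (multiplesZ (Btilde B N)) with hf
  have hanti : Antitone f := by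
    intro M N h
    refine ldl_mono ?_
    rintro n ⟨b, hb, hbn⟩
    exact ⟨b, ⟨hb.1, fun p hp hpb => lt_of_le_of_lt h (hb.2 p hp hpb)⟩, hbn⟩
  have hbdd : BddBelow (Set.range f) := ⟨0, by rintro _ ⟨N, rfl⟩; exact ldl_nonneg _⟩
  have hlim := tendsto_atTop_ciInf hanti hbdd
  set α := ⨅ i, f i with hα
  have hα0 : 0 ≤ α := le_ciInf fun N => ldl_nonneg _
  rcases hα0.eq_or_lt with h0 | hpos
  · right
    rw [h0]; exact hlim
  · left
    intro N
    obtain ⟨C, hC, hst⟩ := stepA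
    set c := min (α / (2 * C)) (1/2) with hc
    have hc0 : 0 < c := by positivity
    have hc1 : c ≤ 1/2 := min_le_right _ _
    have H : ∀ N, ∃ S : Finset ℕ, (∀ b ∈ S, b ∈ Btilde B N) ∧
      (Nat.count (fun x => ¬ hit S x) (∏ b ∈ S, b) : ℝ) ≤ (1 - c) * (∏ b ∈ S, b : ℕ) := by
      intro N
      obtain ⟨S, hS, h⟩ := hst (Btilde B N) α (fun h => hB0 h.1) hpos (ciInf_le hbdd N)
      refine ⟨S, hS, h.trans ?_⟩
      have : c ≤ α / (2 * C) := min_le_left _ _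
      gcongr
    have hk : ∀ k : ℕ, 1 - (1 - c) ^ k ≤ f N := by
      intro k
      obtain ⟨S, Q, hQ0, hSQ, hS, -, hcnt⟩ := iter B hB0 α (1 - c) (by linarith) H k N
      have h1 := ldl_periodic (multiplesZ (Btilde B N)) (hit S) Q hQ0 (hit_periodic S Q hSQ)
        (fun k ⟨b, hb, hbk⟩ => ⟨b, hS b hb, by exact_mod_cast hbk⟩)
      refine le_trans ?_ h1
      have hQ' : (0:ℝ) < Q := by exact_mod_cast hQ0
      rw [le_div_iff₀ hQ']
      have h8 : (Nat.count (hit S) Q : ℝ) + Nat.count (fun x => ¬ hit S x) Q = Q := by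
        exact_mod_cast count_not (hit S) Q
      linarith
    have ht : Tendsto (fun k : ℕ => 1 - (1 - c) ^ k) atTop (𝓝 (1 - 0)) :=
      (tendsto_pow_atTop_nhds_zero_of_lt_one (by linarith) (by linarith)).const_sub 1
    rw [sub_zero] at ht
    exact le_antisymm (ldl_le_one _) (le_of_tendsto' ht hk)
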